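/- Let H be a Hopf algebra over a field k with bijective antipode S, and suppose r ∈ H satisfies the 1-dimensional partial comodule equations. Set e := S⁻¹(r)·r. Then e ≠ 0, e² = e, and e·e_{(1)} ⊗ e_{(2)} = e ⊗ e = e_{(1)}·e ⊗ e_{(2)} in H ⊗ H; in particular e is a subcentral idempotent of H. -/

import Mathlib

open TensorProduct

/-- The five 1-dimensional partial comodule equations for an element `r` of a Hopf
algebra `H`: `ε(r) = 1`; `r ⊗ r·S(r) = r₍₁₎ ⊗ r₍₂₎·S(r)`; `r·S(r₍₁₎) ⊗ r₍₂₎ = r·S(r) ⊗ r`;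
`r ⊗ S(r)·r = r₍₁₎ ⊗ S(r₍₂₎)·r`; `S(r)·r ⊗ r = S(r)·r₍₁₎ ⊗ r₍₂₎`. -/
def OneDimPCM (k : Type*) {H : Type*} [Field k] [Ring H] [HopfAlgebra k H] (r : H) : Prop :=
  Coalgebra.counit (R := k) r = 1
  ∧ r ⊗ₜ[k] (r * HopfAlgebra.antipode (R := k) r)
      = Coalgebra.comul (R := k) r * ((1 : H) ⊗ₜ[k] HopfAlgebra.antipode (R := k) r)
  ∧ (r ⊗ₜ[k] (1 : H)) *
        (LinearMap.rTensor H (HopfAlgebra.antipode (R := k)) (Coalgebra.comul (R := k) r))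
      = (r * HopfAlgebra.antipode (R := k) r) ⊗ₜ[k] r
  ∧ r ⊗ₜ[k] (HopfAlgebra.antipode (R := k) r * r)
      = (LinearMap.lTensor H (HopfAlgebra.antipode (R := k)) (Coalgebra.comul (R := k) r))
          * ((1 : H) ⊗ₜ[k] r)
  ∧ (HopfAlgebra.antipode (R := k) r * r) ⊗ₜ[k] r
      = ((HopfAlgebra.antipode (R := k) r) ⊗ₜ[k] (1 : H)) * Coalgebra.comul (R := k) r

/-!
The identities are first proved for `f := S(r)·r`, which does not involve `S⁻¹`: since
`Δ(S a) = S(a₍₂₎) ⊗ S(a₍₁₎)`, the comodule equations also compute `Δ(S r)·(r ⊗ 1)` and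
`(1 ⊗ r)·Δ(S r)`, and multiplying out gives `Δ(f)·(1 ⊗ f) = f ⊗ f = (1 ⊗ f)·Δ(f)`.
The map `x ⊗ y ↦ S y ⊗ S x` reverses products and intertwines `Δ` with `Δ ∘ S`, so it carries the
identities claimed for `e` to those for `f = S e`; being injective, it reflects them.
Idempotency follows by applying `id ⊗ ε` to `(e ⊗ 1)·Δ(e) = e ⊗ e`.
-/

open Coalgebra HopfAlgebra WithConv

section Algebra

variable {R A B C : Type*} [CommSemiring R] [Semiring A] [Algebra R A] [Semiring B] [Algebra R B]
  [Semiring C] [Algebra R C]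

theorem mul'_mul_one_tmul (z : A ⊗[R] A) (a : A) :
    LinearMap.mul' R A (z * (1 ⊗ₜ a)) = LinearMap.mul' R A z * a := by
  induction z with
  | zero => simp
  | add z w hz hw => simp only [map_add, add_mul, hz, hw]
  | tmul x y => simp [mul_assoc]

theorem rTensor_mul_one_tmul (f : A →ₗ[R] B) (z : A ⊗[R] C) (c : C) :
    f.rTensor C (z * (1 ⊗ₜ c)) = f.rTensor C z * (1 ⊗ₜ c) := by
  induction z with
  | zero => simp
  | add z w hz hw => simp only [map_add, add_mul, hz, hw]
  | tmul x y => simp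

end Algebra

section Bialgebra

variable {R A : Type*} [CommSemiring R] [Semiring A] [Bialgebra R A]

theorem isIdempotentElem_of_tmul_one_mul_comul {e : A}
    (hε : counit (R := R) e = 1) (h : (e ⊗ₜ 1) * comul e = e ⊗ₜ[R] e) : IsIdempotentElem e := by
  let idε : A ⊗[R] A →ₐ[R] A ⊗[R] R :=
    Algebra.TensorProduct.map (AlgHom.id R A) (Bialgebra.counitAlgHom R A)
  have idε_comul : idε (comul e) = e ⊗ₜ 1 := lTensor_counit_comul e
  have h_tmul : (e * e) ⊗ₜ[R] (1 : R) = e ⊗ₜ 1 := by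
    simpa [idε_comul, map_mul, idε, hε] using congr(idε $h)
  rw [IsIdempotentElem]
  simpa using congr(TensorProduct.rid R A $h_tmul)

theorem toConv_comul_eq_includeLeft_mul_includeRight :
    toConv (comul (R := R) (A := A)) =
      toConv (Algebra.TensorProduct.includeLeft (R := R) (S := R) (A := A) (B := A)).toLinearMap *
        toConv (Algebra.TensorProduct.includeRight (R := R) (A := A) (B := A)).toLinearMap := by
  ext a
  rw [(ℛ R a).convMul_apply]
  simp [(ℛ R a).eq]

end Bialgebra

section HopfAlgebra

variable {R A : Type*} [CommSemiring R] [Semiring A] [HopfAlgebra R A]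

theorem algHom_comp_antipode_convMul {B : Type*} [Semiring B] [Algebra R B] (φ : A →ₐ[R] B) :
    toConv (φ.toLinearMap ∘ₗ antipode R) * toConv φ.toLinearMap = 1 := by
  have h := LinearMap.algHom_comp_convMul_distrib φ (toConv (antipode R)) (toConv LinearMap.id)
  rw [LinearMap.antipode_mul_id] at h
  apply WithConv.ofConv_injective
  refine Eq.trans h.symm ?_
  ext a
  simp only [LinearMap.convOne_def, LinearMap.comp_apply, Algebra.linearMap_apply,
    AlgHom.toLinearMap_apply, AlgHom.commutes]

variable (R A) in
/-- The linear map `x ⊗ y ↦ S y ⊗ S x`, through which the antipode acts on `A ⊗ A` so as to be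
compatible with comultiplication. -/
noncomputable def antipodeFlip : A ⊗[R] A →ₗ[R] A ⊗[R] A :=
  TensorProduct.map (antipode R) (antipode R) ∘ₗ (TensorProduct.comm R A A).toLinearMap

@[simp]
theorem antipodeFlip_tmul (x y : A) :
    antipodeFlip R A (x ⊗ₜ y) = antipode R y ⊗ₜ antipode R x :=
  rfl

theorem antipodeFlip_injective
    (hS : Function.Injective (TensorProduct.map (antipode R (A := A)) (antipode R (A := A)))) :
    Function.Injective (antipodeFlip R A) :=
  hS.comp (TensorProduct.comm R A A).injective

theorem antipodeFlip_mul (z w : A ⊗[R] A) :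
    antipodeFlip R A (z * w) = antipodeFlip R A w * antipodeFlip R A z := by
  induction z with
  | zero => simp
  | add z₁ z₂ h₁ h₂ => simp only [add_mul, mul_add, map_add, h₁, h₂]
  | tmul x y =>
    induction w with
    | zero => simp
    | add w₁ w₂ h₁ h₂ => simp only [add_mul, mul_add, map_add, h₁, h₂]
    | tmul x' y' => simp [antipode_mul_antidistrib]

theorem toConv_antipodeFlip_comp_comul :
    toConv (antipodeFlip R A ∘ₗ comul) =
      toConv ((Algebra.TensorProduct.includeRight (R := R) (A := A) (B := A)).toLinearMap ∘ₗ
          antipode R) *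
        toConv ((Algebra.TensorProduct.includeLeft (R := R) (S := R) (A := A) (B := A)).toLinearMap
          ∘ₗ antipode R) := by
  ext a
  rw [(ℛ R a).convMul_apply]
  simp [← (ℛ R a).eq]

-- Both sides are convolution inverses of `Δ`.
theorem antipodeFlip_comul (a : A) :
    antipodeFlip R A (comul a) = comul (R := R) (antipode R a) := by
  have h_left : toConv (antipodeFlip R A ∘ₗ comul) * toConv (comul (R := R) (A := A)) = 1 := by
    rw [toConv_antipodeFlip_comp_comul, toConv_comul_eq_includeLeft_mul_includeRight, mul_assoc,
      ← mul_assoc (toConv (AlgHom.toLinearMap Algebra.TensorProduct.includeLeft ∘ₗ antipode R)),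
      algHom_comp_antipode_convMul, one_mul, algHom_comp_antipode_convMul]
  have h := WithConv.toConv_injective (left_inv_eq_right_inv h_left LinearMap.comul_right_inv)
  exact LinearMap.congr_fun h a

theorem antipodeFlip_mul_tmul_one (z : A ⊗[R] A) (a : A) :
    antipodeFlip R A z * (a ⊗ₜ 1) =
      TensorProduct.comm R A A
        ((antipode R).rTensor A ((antipode R).lTensor A z * (1 ⊗ₜ a))) := by
  induction z with
  | zero => simp
  | add z w hz hw => simp only [map_add, add_mul, hz, hw]
  | tmul x y => simp

theorem one_tmul_mul_antipodeFlip (z : A ⊗[R] A) (a : A) :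
    (1 ⊗ₜ a) * antipodeFlip R A z =
      TensorProduct.comm R A A
        ((antipode R).lTensor A ((a ⊗ₜ 1) * (antipode R).rTensor A z)) := by
  induction z with
  | zero => simp
  | add z w hz hw => simp only [map_add, mul_add, hz, hw]
  | tmul x y => simp

theorem tmul_one_mul_comul_of_antipode (hS : Function.Injective (antipodeFlip R A)) {e : A}
    (h : comul (antipode R e) * (1 ⊗ₜ antipode R e) = antipode R e ⊗ₜ[R] antipode R e) :
    (e ⊗ₜ 1) * comul e = e ⊗ₜ[R] e :=
  hS <| by simpa [antipodeFlip_mul, antipodeFlip_comul] using h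

theorem comul_mul_tmul_one_of_antipode (hS : Function.Injective (antipodeFlip R A)) {e : A}
    (h : (1 ⊗ₜ antipode R e) * comul (antipode R e) = antipode R e ⊗ₜ[R] antipode R e) :
    comul e * (e ⊗ₜ 1) = e ⊗ₜ[R] e :=
  hS <| by simpa [antipodeFlip_mul, antipodeFlip_comul] using h

end HopfAlgebra

/-- The 1-dimensional partial comodule equations for an element of a Hopf algebra over a
commutative semiring; over a field this is `OneDimPCM`. -/
structure IsOneDimPartialComodule (R : Type*) {A : Type*} [CommSemiring R] [Semiring A]
    [HopfAlgebra R A] (r : A) : Prop where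
  counit_eq_one : counit (R := R) r = 1
  comul_mul_one_tmul_antipode :
    comul r * (1 ⊗ₜ antipode R r) = r ⊗ₜ[R] (r * antipode R r)
  tmul_one_mul_rTensor_comul :
    (r ⊗ₜ 1) * (antipode R).rTensor A (comul r) = (r * antipode R r) ⊗ₜ[R] r
  lTensor_comul_mul_one_tmul :
    (antipode R).lTensor A (comul r) * (1 ⊗ₜ r) = r ⊗ₜ[R] (antipode R r * r)
  antipode_tmul_one_mul_comul :
    (antipode R r ⊗ₜ 1) * comul r = (antipode R r * r) ⊗ₜ[R] r

theorem OneDimPCM.isOneDimPartialComodule {k H : Type*} [Field k] [Ring H] [HopfAlgebra k H]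
    {r : H} : OneDimPCM k r → IsOneDimPartialComodule k r
  | ⟨h₁, h₂, h₃, h₄, h₅⟩ => ⟨h₁, h₂.symm, h₃, h₄.symm, h₅.symm⟩

namespace IsOneDimPartialComodule

variable {R A : Type*} [CommSemiring R] [Semiring A] [HopfAlgebra R A] {r : A}

theorem mul_antipode_mul_self (hr : IsOneDimPartialComodule R r) :
    r * antipode R r * r = r := by
  have h := congr(LinearMap.mul' R A $hr.lTensor_comul_mul_one_tmul)
  simpa [mul'_mul_one_tmul, hr.counit_eq_one, mul_assoc] using h.symm

theorem antipode_mul_self_mul_antipode (hr : IsOneDimPartialComodule R r) :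
    antipode R r * r * antipode R r = antipode R r := by
  have h := congr(LinearMap.mul' R A ((antipode R).rTensor A $hr.comul_mul_one_tmul_antipode))
  simpa [rTensor_mul_one_tmul, mul'_mul_one_tmul, hr.counit_eq_one, mul_assoc] using h.symm

theorem comul_antipode_mul_tmul_one (hr : IsOneDimPartialComodule R r) :
    comul (antipode R r) * (r ⊗ₜ 1) = (antipode R r * r) ⊗ₜ[R] antipode R r := by
  rw [← antipodeFlip_comul, antipodeFlip_mul_tmul_one, hr.lTensor_comul_mul_one_tmul,
    LinearMap.rTensor_tmul, TensorProduct.comm_tmul]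

theorem one_tmul_mul_comul_antipode (hr : IsOneDimPartialComodule R r) :
    (1 ⊗ₜ r) * comul (antipode R r) = antipode R r ⊗ₜ[R] (r * antipode R r) := by
  rw [← antipodeFlip_comul, one_tmul_mul_antipodeFlip, hr.tmul_one_mul_rTensor_comul,
    LinearMap.lTensor_tmul, TensorProduct.comm_tmul]

theorem comul_antipode_mul_self_mul_one_tmul (hr : IsOneDimPartialComodule R r) :
    comul (antipode R r * r) * ((1 : A) ⊗ₜ[R] (antipode R r * r)) =
      (antipode R r * r) ⊗ₜ[R] (antipode R r * r) := by
  calc comul (antipode R r * r) * ((1 : A) ⊗ₜ[R] (antipode R r * r))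
      = comul (antipode R r) * (comul r * ((1 : A) ⊗ₜ[R] antipode R r)) * ((1 : A) ⊗ₜ[R] r) := by
        simp [Bialgebra.comul_mul, mul_assoc]
    _ = comul (antipode R r) * (r ⊗ₜ[R] (1 : A)) * ((1 : A) ⊗ₜ[R] r) := by
        rw [hr.comul_mul_one_tmul_antipode]
        simp [mul_assoc, hr.mul_antipode_mul_self]
    _ = (antipode R r * r) ⊗ₜ[R] (antipode R r * r) := by
        simp [hr.comul_antipode_mul_tmul_one]

theorem one_tmul_mul_comul_antipode_mul_self (hr : IsOneDimPartialComodule R r) :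
    ((1 : A) ⊗ₜ[R] (antipode R r * r)) * comul (antipode R r * r) =
      (antipode R r * r) ⊗ₜ[R] (antipode R r * r) := by
  calc ((1 : A) ⊗ₜ[R] (antipode R r * r)) * comul (antipode R r * r)
      = ((1 : A) ⊗ₜ[R] antipode R r) * (((1 : A) ⊗ₜ[R] r) * comul (antipode R r)) * comul r := by
        simp [Bialgebra.comul_mul, ← mul_assoc]
    _ = ((1 : A) ⊗ₜ[R] antipode R r) * ((antipode R r ⊗ₜ[R] (1 : A)) * comul r) := by
        rw [hr.one_tmul_mul_comul_antipode]
        simp [← mul_assoc, hr.antipode_mul_self_mul_antipode]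
    _ = (antipode R r * r) ⊗ₜ[R] (antipode R r * r) := by
        simp [hr.antipode_tmul_one_mul_comul]

end IsOneDimPartialComodule

theorem stmt12_general {R A : Type*} [CommSemiring R] [Nontrivial R] [Semiring A] [HopfAlgebra R A]
    (hS : Function.Injective (TensorProduct.map (antipode R (A := A)) (antipode R (A := A))))
    {r r' e : A} (hr : IsOneDimPartialComodule R r) (hr' : antipode R r' = r) (he : e = r' * r) :
    e ≠ 0 ∧ e * e = e ∧ (e ⊗ₜ 1) * comul e = e ⊗ₜ[R] e ∧ comul e * (e ⊗ₜ 1) = e ⊗ₜ[R] e := by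
  have counit_e : counit (R := R) e = 1 := by
    rw [he, Bialgebra.counit_mul, ← counit_antipode r', hr', hr.counit_eq_one, one_mul]
  have antipode_e : antipode R e = antipode R r * r := by rw [he, antipode_mul_antidistrib, hr']
  have comul_left : (e ⊗ₜ 1) * comul e = e ⊗ₜ[R] e :=
    tmul_one_mul_comul_of_antipode (antipodeFlip_injective hS)
      (by rw [antipode_e, hr.comul_antipode_mul_self_mul_one_tmul])
  have comul_right : comul e * (e ⊗ₜ 1) = e ⊗ₜ[R] e :=
    comul_mul_tmul_one_of_antipode (antipodeFlip_injective hS)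
      (by rw [antipode_e, hr.one_tmul_mul_comul_antipode_mul_self])
  refine ⟨?_, isIdempotentElem_of_tmul_one_mul_comul counit_e comul_left, comul_left, comul_right⟩
  rintro rfl
  exact zero_ne_one ((map_zero _).symm.trans counit_e)

/-- if `H` has bijective antipode and `r ∈ H` satisfies the 1-dimensional
partial comodule equations, then `e := S⁻¹(r)·r` is nonzero, idempotent and satisfies
`e·e₍₁₎ ⊗ e₍₂₎ = e ⊗ e = e₍₁₎·e ⊗ e₍₂₎`; in particular it is a subcentral idempotent. -/
theorem stmt12 (k H : Type*) [Field k] [Ring H] [HopfAlgebra k H]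
    (hS : Function.Bijective (HopfAlgebra.antipode (R := k) (A := H)))
    (r : H) (hr : OneDimPCM k r)
    (r' : H) (hr' : HopfAlgebra.antipode (R := k) r' = r)
    (e : H) (he : e = r' * r) :
    e ≠ 0
    ∧ e * e = e
    ∧ (e ⊗ₜ[k] (1 : H)) * Coalgebra.comul (R := k) e = e ⊗ₜ[k] e
    ∧ Coalgebra.comul (R := k) e * (e ⊗ₜ[k] (1 : H)) = e ⊗ₜ[k] e := by
  exact stmt12_general (TensorProduct.map_injective_of_flat_flat _ _ hS.injective hS.injective)
    hr.isOneDimPartialComodule hr' he
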